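/- Let α : ℝ × ℝ → ℝ³ be a smooth solution of the vortex filament equation α_t = α_s ×_L α_ss in Minkowski 3-space, and suppose there is a constant c with ⟨α_s(s,0), α_s(s,0)⟩_L = c for all s. Then ⟨α_s(s,t), α_s(s,t)⟩_L = c for all (s,t). In particular, if α(·,0) is parametrized by arc length (that is, |⟨α_s(s,0), α_s(s,0)⟩_L| = 1 for all s), then so is α(·,t) for all t. -/

import Mathlib

noncomputable section

open Real

/-- Minkowski 3-space: ℝ³ as a vector type. -/
abbrev V3 : Type := Fin 3 → ℝ

/-- Lorentzian inner product ⟨x,y⟩_L = −x₁y₁ + x₂y₂ + x₃y₃ on ℝ³. -/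
def lor (x y : V3) : ℝ := -(x 0 * y 0) + x 1 * y 1 + x 2 * y 2

/-- Lorentzian cross product x ×_L y = (x₃y₂ − x₂y₃, x₃y₁ − x₁y₃, x₁y₂ − x₂y₁). -/
def lcross (x y : V3) : V3 :=
  ![x 2 * y 1 - x 1 * y 2, x 2 * y 0 - x 0 * y 2, x 0 * y 1 - x 1 * y 0]

/-- Partial derivative with respect to the first variable `s`. -/
def pds {E : Type*} [NormedAddCommGroup E] [NormedSpace ℝ E]
    (f : ℝ × ℝ → E) (p : ℝ × ℝ) : E := deriv (fun s => f (s, p.2)) p.1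

/-- Partial derivative with respect to the second variable `t`. -/
def pdt {E : Type*} [NormedAddCommGroup E] [NormedSpace ℝ E]
    (f : ℝ × ℝ → E) (p : ℝ × ℝ) : E := deriv (fun t => f (p.1, t)) p.2

/-!
Pairing `α_t = α_s ×_L α_ss` with `α_s` and with `α_ss` gives zero. Differentiating
`⟨α_s, α_t⟩_L = 0` in `s` therefore gives `⟨α_s, α_ts⟩_L = -⟨α_ss, α_t⟩_L = 0`, and since mixed
partials commute, `∂_t ⟨α_s, α_s⟩_L = 2 ⟨α_s, α_st⟩_L = 0`.
-/

section PartialDerivatives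

variable {E : Type*} [NormedAddCommGroup E] [NormedSpace ℝ E] {f : ℝ × ℝ → E} {p : ℝ × ℝ}

lemma hasDerivAt_fderiv_fst (hf : DifferentiableAt ℝ f p) :
    HasDerivAt (fun s => f (s, p.2)) (fderiv ℝ f p (1, 0)) p.1 :=
  hf.hasFDerivAt.comp_hasDerivAt p.1 ((hasDerivAt_id p.1).prodMk (hasDerivAt_const p.1 p.2))

lemma hasDerivAt_fderiv_snd (hf : DifferentiableAt ℝ f p) :
    HasDerivAt (fun t => f (p.1, t)) (fderiv ℝ f p (0, 1)) p.2 :=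
  hf.hasFDerivAt.comp_hasDerivAt p.2 ((hasDerivAt_const p.2 p.1).prodMk (hasDerivAt_id p.2))

lemma pds_eq_fderiv (hf : Differentiable ℝ f) : pds f = fun p => fderiv ℝ f p (1, 0) :=
  funext fun p => (hasDerivAt_fderiv_fst (hf p)).deriv

lemma pdt_eq_fderiv (hf : Differentiable ℝ f) : pdt f = fun p => fderiv ℝ f p (0, 1) :=
  funext fun p => (hasDerivAt_fderiv_snd (hf p)).deriv

lemma hasDerivAt_pds (hf : DifferentiableAt ℝ f p) :
    HasDerivAt (fun s => f (s, p.2)) (pds f p) p.1 :=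
  (hasDerivAt_fderiv_fst hf).differentiableAt.hasDerivAt

lemma hasDerivAt_pdt (hf : DifferentiableAt ℝ f p) :
    HasDerivAt (fun t => f (p.1, t)) (pdt f p) p.2 :=
  (hasDerivAt_fderiv_snd hf).differentiableAt.hasDerivAt

lemma contDiff_pds {m n : WithTop ℕ∞} (hf : ContDiff ℝ n f) (hmn : m + 1 ≤ n) :
    ContDiff ℝ m (pds f) := by
  have hd : Differentiable ℝ f := (hf.of_le (le_add_self.trans hmn)).differentiable one_ne_zero
  rw [pds_eq_fderiv hd]
  exact (hf.fderiv_right hmn).clm_apply contDiff_const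

lemma contDiff_pdt {m n : WithTop ℕ∞} (hf : ContDiff ℝ n f) (hmn : m + 1 ≤ n) :
    ContDiff ℝ m (pdt f) := by
  have hd : Differentiable ℝ f := (hf.of_le (le_add_self.trans hmn)).differentiable one_ne_zero
  rw [pdt_eq_fderiv hd]
  exact (hf.fderiv_right hmn).clm_apply contDiff_const

lemma differentiable_pds (hf : ContDiff ℝ 2 f) : Differentiable ℝ (pds f) :=
  (contDiff_pds hf one_add_one_eq_two.le).differentiable one_ne_zero

lemma differentiable_pdt (hf : ContDiff ℝ 2 f) : Differentiable ℝ (pdt f) :=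
  (contDiff_pdt hf one_add_one_eq_two.le).differentiable one_ne_zero

lemma pdt_pds_comm (hf : ContDiff ℝ 2 f) (p : ℝ × ℝ) : pdt (pds f) p = pds (pdt f) p := by
  have hd : Differentiable ℝ f := hf.differentiable two_ne_zero
  have hdd : DifferentiableAt ℝ (fderiv ℝ f) p :=
    (hf.fderiv_right one_add_one_eq_two.le).differentiable one_ne_zero p
  have fderiv_apply (v w : ℝ × ℝ) :
      fderiv ℝ (fun q => fderiv ℝ f q v) p w = fderiv ℝ (fderiv ℝ f) p w v := by
    simp [fderiv_clm_apply hdd (differentiableAt_const v)]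
  have symm : IsSymmSndFDerivAt ℝ f p := hf.contDiffAt.isSymmSndFDerivAt (by simp)
  calc pdt (pds f) p
      = fderiv ℝ (fun q => fderiv ℝ f q (1, 0)) p (0, 1) := by
        rw [pdt_eq_fderiv (differentiable_pds hf), pds_eq_fderiv hd]
    _ = fderiv ℝ (fun q => fderiv ℝ f q (0, 1)) p (1, 0) := by
        rw [fderiv_apply, fderiv_apply, symm.eq]
    _ = pds (pdt f) p := by
        rw [pds_eq_fderiv (differentiable_pdt hf), pdt_eq_fderiv hd]

lemma eq_of_pdt_eq_zero (hf : Differentiable ℝ f) {s : ℝ} (h : ∀ t, pdt f (s, t) = 0)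
    (t t₀ : ℝ) : f (s, t) = f (s, t₀) :=
  is_const_of_deriv_eq_zero (f := fun t => f (s, t))
    (fun t => (hasDerivAt_pdt (hf (s, t))).differentiableAt) h t t₀

end PartialDerivatives

section ProductRule

variable {E F G : Type*} [NormedAddCommGroup E] [NormedSpace ℝ E]
  [NormedAddCommGroup F] [NormedSpace ℝ F] [NormedAddCommGroup G] [NormedSpace ℝ G]
  (B : E →L[ℝ] F →L[ℝ] G) {u : ℝ × ℝ → E} {v : ℝ × ℝ → F} {p : ℝ × ℝ}

lemma pds_bilin (hu : DifferentiableAt ℝ u p) (hv : DifferentiableAt ℝ v p) :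
    pds (fun q => B (u q) (v q)) p = B (u p) (pds v p) + B (pds u p) (v p) :=
  (B.hasDerivAt_of_bilinear (fun _ => hasDerivAt_pds hu) (fun _ => hasDerivAt_pds hv)).deriv

lemma pdt_bilin (hu : DifferentiableAt ℝ u p) (hv : DifferentiableAt ℝ v p) :
    pdt (fun q => B (u q) (v q)) p = B (u p) (pdt v p) + B (pdt u p) (v p) :=
  (B.hasDerivAt_of_bilinear (fun _ => hasDerivAt_pdt hu) (fun _ => hasDerivAt_pdt hv)).deriv

end ProductRule

section OrthogonalVelocity

variable {E F : Type*} [NormedAddCommGroup E] [NormedSpace ℝ E]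
  [NormedAddCommGroup F] [NormedSpace ℝ F] {B : E →L[ℝ] E →L[ℝ] F} {α : ℝ × ℝ → E}

lemma bilin_pds_pdt_pds_eq_zero (hα : ContDiff ℝ 2 α)
    (h_tangent : ∀ p, B (pds α p) (pdt α p) = 0)
    (h_accel : ∀ p, B (pds (pds α) p) (pdt α p) = 0) (p : ℝ × ℝ) :
    B (pds α p) (pdt (pds α) p) = 0 := by
  have pds_tangent : pds (fun q => B (pds α q) (pdt α q)) p = 0 := by
    rw [funext h_tangent]
    exact deriv_const _ _
  rwa [pds_bilin B (differentiable_pds hα p) (differentiable_pdt hα p), h_accel, add_zero,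
    ← pdt_pds_comm hα] at pds_tangent

theorem bilin_pds_self_eq_of_orthogonal (hB : ∀ x y, B x y = B y x) (hα : ContDiff ℝ 2 α)
    (h_tangent : ∀ p, B (pds α p) (pdt α p) = 0)
    (h_accel : ∀ p, B (pds (pds α) p) (pdt α p) = 0) (s t t₀ : ℝ) :
    B (pds α (s, t)) (pds α (s, t)) = B (pds α (s, t₀)) (pds α (s, t₀)) := by
  have hd : Differentiable ℝ (pds α) := differentiable_pds hα
  refine eq_of_pdt_eq_zero (f := fun q => B (pds α q) (pds α q)) (by fun_prop) (fun τ => ?_) t t₀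
  rw [pdt_bilin B (hd _) (hd _), hB (pdt (pds α) _),
    bilin_pds_pdt_pds_eq_zero hα h_tangent h_accel, add_zero]

end OrthogonalVelocity

section Lorentz

lemma lor_comm (x y : V3) : lor x y = lor y x := by
  simp only [lor]
  ring

lemma lor_lcross_self_left (x y : V3) : lor x (lcross x y) = 0 := by
  simp only [lor, lcross, Matrix.cons_val]
  ring

lemma lor_lcross_self_right (x y : V3) : lor y (lcross x y) = 0 := by
  simp only [lor, lcross, Matrix.cons_val]
  ring

/-- The Lorentzian inner product `lor` bundled as a continuous bilinear form, so that the product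
rule for bilinear maps applies to it. -/
def lorForm : V3 →L[ℝ] V3 →L[ℝ] ℝ :=
  LinearMap.toContinuousBilinearMap <| LinearMap.mk₂ ℝ lor
    (fun x x' y => by simp only [lor, Pi.add_apply]; ring)
    (fun a x y => by simp only [lor, Pi.smul_apply, smul_eq_mul]; ring)
    (fun x y y' => by simp only [lor, Pi.add_apply]; ring)
    (fun a x y => by simp only [lor, Pi.smul_apply, smul_eq_mul]; ring)

lemma lorForm_apply (x y : V3) : lorForm x y = lor x y := rfl

end Lorentz

theorem statement1_general (α : ℝ × ℝ → V3) (hα : ContDiff ℝ 2 α)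
    (hvfe : ∀ p, pdt α p = lcross (pds α p) (pds (pds α) p)) (s t t₀ : ℝ) :
    lor (pds α (s, t)) (pds α (s, t)) = lor (pds α (s, t₀)) (pds α (s, t₀)) := by
  simp only [← lorForm_apply]
  refine bilin_pds_self_eq_of_orthogonal lor_comm hα (fun p => ?_) (fun p => ?_) s t t₀
  · rw [hvfe, lorForm_apply, lor_lcross_self_left]
  · rw [hvfe, lorForm_apply, lor_lcross_self_right]

/-- If `α : ℝ × ℝ → ℝ³` is a smooth solution of the vortex filament
equation `α_t = α_s ×_L α_ss` in Minkowski 3-space and `⟨α_s(s,0), α_s(s,0)⟩_L = c`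
for all `s`, then `⟨α_s(s,t), α_s(s,t)⟩_L = c` for all `(s,t)`.  In particular, if
`α(·,0)` is parametrized by arc length (`|⟨α_s(s,0),α_s(s,0)⟩_L| = 1` for all `s`),
then so is `α(·,t)` for every `t`. -/
theorem statement1 (α : ℝ × ℝ → V3) (hα : ContDiff ℝ (⊤ : ℕ∞) α)
    (hvfe : ∀ p, pdt α p = lcross (pds α p) (pds (pds α) p))
    (c : ℝ) (hc : ∀ s : ℝ, lor (pds α (s, 0)) (pds α (s, 0)) = c) :
    (∀ s t : ℝ, lor (pds α (s, t)) (pds α (s, t)) = c) ∧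
    ((∀ s : ℝ, |lor (pds α (s, 0)) (pds α (s, 0))| = 1) →
      ∀ s t : ℝ, |lor (pds α (s, t)) (pds α (s, t))| = 1) := by
  have conserved (s t : ℝ) :
      lor (pds α (s, t)) (pds α (s, t)) = lor (pds α (s, 0)) (pds α (s, 0)) :=
    statement1_general α (contDiff_infty.1 hα 2) hvfe s t 0
  exact ⟨fun s t => (conserved s t).trans (hc s), fun h s t => by rw [conserved, h]⟩
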